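/- For every multiset X of n elements of ZMod m there exists a multiset Y of elements of ZMod m such that Y* = X*, every element of ZMod m has multiplicity at most 2 in Y, and the cardinality of Y is at most min(n, 2·|X*|). (Correctness of the preprocessing that ensures n = O(|X*|).) -/

import Mathlib

/-- The set of attainable subset sums of a multiset `X` over `ZMod m`:
all values `Y.sum` for sub-multisets `Y ≤ X`. -/
def subsetSums {m : ℕ} (X : Multiset (ZMod m)) : Set (ZMod m) :=
  {s | ∃ Y ≤ X, Y.sum = s}

theorem mem_subsetSums_cons {m : ℕ} (a : ZMod m) (Z : Multiset (ZMod m)) (s : ZMod m) :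
    s ∈ subsetSums (a ::ₘ Z) ↔ s ∈ subsetSums Z ∨ s - a ∈ subsetSums Z := by
  constructor
  · rintro ⟨Y, hY, rfl⟩
    by_cases h : a ∈ Y
    · obtain ⟨W, rfl⟩ := Multiset.exists_cons_of_mem h
      right
      exact ⟨W, (Multiset.cons_le_cons_iff a).1 hY, by simp⟩
    · left
      exact ⟨Y, (Multiset.le_cons_of_notMem h).1 hY, rfl⟩
  · rintro (⟨Y, hY, h⟩ | ⟨Y, hY, h⟩)
    · exact ⟨Y, hY.trans (Multiset.le_cons_self _ _), h⟩
    · exact ⟨a ::ₘ Y, (Multiset.cons_le_cons_iff a).2 hY, by rw [Multiset.sum_cons, h]; ring⟩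

theorem subsetSums_reduce {m : ℕ} (a : ZMod m) (Z : Multiset (ZMod m)) :
    subsetSums (a ::ₘ (2 * a) ::ₘ Z) = subsetSums (a ::ₘ a ::ₘ a ::ₘ Z) := by
  ext s
  have h1 : s - 2 * a = s - a - a := by ring
  have h2 : s - a - 2 * a = s - a - a - a := by ring
  simp only [mem_subsetSums_cons, h1, h2]
  tauto

/-- Correctness of the preprocessing: every multiset `X` of `n` elements of `ZMod m`
can be replaced by a multiset `Y` with the same attainable subset sums, in which
every element has multiplicity at most 2, and whose cardinality is at most
`min n (2·|X*|)`. -/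
theorem preprocessing (m : ℕ) (hm : 1 ≤ m) (X : Multiset (ZMod m)) :
    ∃ Y : Multiset (ZMod m),
      subsetSums Y = subsetSums X ∧
      (∀ a : ZMod m, Y.count a ≤ 2) ∧
      Y.card ≤ min X.card (2 * (subsetSums X).ncard) := by
  classical
  haveI : NeZero m := ⟨by omega⟩
  let P : ℕ → Prop := fun k => ∃ Y : Multiset (ZMod m), subsetSums Y = subsetSums X ∧ Y.card = k
  have hP : ∃ k, P k := ⟨_, X, rfl, rfl⟩
  obtain ⟨Y, hY, hk⟩ := Nat.find_spec hP
  have hmin : ∀ W : Multiset (ZMod m), subsetSums W = subsetSums X → Y.card ≤ W.card := by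
    intro W hW
    rw [hk]
    exact Nat.find_min' hP ⟨W, hW, rfl⟩
  have hc : ∀ a : ZMod m, Y.count a ≤ 2 := by
    intro a
    by_contra! h
    have h3 : Multiset.replicate 3 a ≤ Y := Multiset.le_count_iff_replicate_le.1 h
    obtain ⟨Z, hZ⟩ := Multiset.le_iff_exists_add.1 h3
    have hZ' : Y = a ::ₘ a ::ₘ a ::ₘ Z := by
      rw [hZ]; simp [Multiset.replicate_succ]
    have := hmin (a ::ₘ (2 * a) ::ₘ Z) (by rw [subsetSums_reduce, ← hZ', hY])
    rw [hZ'] at this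
    simp at this
  refine ⟨Y, hY, hc, le_min (hmin X rfl) ?_⟩
  have hsub : (Y.toFinset : Set (ZMod m)) ⊆ subsetSums X := by
    intro a ha
    rw [← hY]
    exact ⟨{a}, by simpa using ha, by simp⟩
  have h1 : Y.toFinset.card ≤ (subsetSums X).ncard := by
    rw [← Set.ncard_coe_finset]
    exact Set.ncard_le_ncard hsub (Set.toFinite _)
  have h2 : Y.card ≤ Y.toFinset.card * 2 := by
    rw [← Multiset.toFinset_sum_count_eq Y]
    exact Finset.sum_le_card_nsmul _ _ 2 (fun a _ => hc a)
  omega
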